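/- arXiv:2401.01061 — 9 statements merged into one kernel-verified Lean document; each statement's English description precedes it below -/
import Mathlib

section
/- Let X be a complex Banach space and T ∈ L(X). The following are equivalent: (i) there exists P ∈ L(X) with P² − P compact and PT − TP compact, and there exists U ∈ L(X) with UP − PU compact and U(T + P) − I compact (i.e. the image of T in the Calkin algebra is left p-invertible for the idempotent p = Π(P)); (ii) there exists S ∈ L(X) such that STS − S, S²T − S and TST − ST² are all compact, and there exists V ∈ L(X) such that the commutator VST − STV and V(I + T − ST) − I are compact. Moreover, when (ii) holds, the operator P in (i) may be chosen so that P − (I − ST) is compact. -/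
theorem calkin_alg1 {R : Type*} [Ring R] {t s v : R} (h1 : s * t * s = s)
    (h3 : t * s * t = s * t * t) (h4 : v * (s * t) = s * t * v)
    (h5 : v * (1 + t - s * t) = 1) :
    (1 - s * t) * (1 - s * t) = 1 - s * t ∧ (1 - s * t) * t = t * (1 - s * t) ∧
      v * (1 - s * t) = (1 - s * t) * v ∧ v * (t + (1 - s * t)) = 1 := by
  refine ⟨?_, ?_, ?_, ?_⟩
  · have : s * t * (s * t) = s * t := by rw [← mul_assoc, h1]
    rw [mul_sub, sub_mul, sub_mul, this]; simp
  · rw [sub_mul, mul_sub, ← mul_assoc t s t, h3]; simp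
  · rw [sub_mul, mul_sub, h4]; simp
  · rw [← add_sub_assoc, add_comm t 1]; exact h5

theorem calkin_alg2 {R : Type*} [Ring R] {t p u : R} (h1 : p * p = p)
    (h2 : p * t = t * p) (h3 : u * p = p * u) (h4 : u * (t + p) = 1) :
    (u * (1 - p)) * t * (u * (1 - p)) = u * (1 - p) ∧
    (u * (1 - p)) * (u * (1 - p)) * t = u * (1 - p) ∧
    t * (u * (1 - p)) * t = (u * (1 - p)) * t * t ∧
    u * ((u * (1 - p)) * t) = (u * (1 - p)) * t * u ∧
    u * (1 + t - (u * (1 - p)) * t) = 1 := by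
  have hpp : p * (1 - p) = 0 := by rw [mul_sub, h1]; simp
  have hpp2 : (1 - p) * (1 - p) = 1 - p := by rw [sub_mul, hpp]; simp
  have hct : (1 - p) * t = t * (1 - p) := by rw [sub_mul, mul_sub, h2]; simp
  have hcu : u * (1 - p) = (1 - p) * u := by rw [sub_mul, mul_sub, h3]; simp
  have hst : u * (1 - p) * t = 1 - p := by
    have : u * (t + p) * (1 - p) = 1 - p := by rw [h4, one_mul]
    rw [mul_assoc, add_mul, hpp, add_zero, ← hct, ← mul_assoc] at this
    exact this
  refine ⟨?_, ?_, ?_, ?_, ?_⟩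
  · rw [hst, hcu, ← mul_assoc, hpp2]
  · rw [mul_assoc, hst, mul_assoc, hpp2]
  · rw [mul_assoc, hst, hct]
  · rw [hst, hcu]
  · rw [hst]; convert h4 using 2; abel

/-- The two-sided ideal of compact operators. -/
def calkinIdeal (X : Type*) [NormedAddCommGroup X] [NormedSpace ℂ X] :
    TwoSidedIdeal (X →L[ℂ] X) :=
  TwoSidedIdeal.mk' {A | IsCompactOperator ⇑A} isCompactOperator_zero
    (fun hx hy => hx.add hy) (fun hx => hx.neg)
    (fun {x _} hy => hy.clm_comp x) (fun {_ y} hx => hx.comp_clm y)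

theorem calkin_iff {X : Type*} [NormedAddCommGroup X] [NormedSpace ℂ X] (A B : X →L[ℂ] X) :
    IsCompactOperator ⇑(A - B) ↔
      (calkinIdeal X).ringCon.mk' A = (calkinIdeal X).ringCon.mk' B := by
  have h : A - B ∈ calkinIdeal X ↔ IsCompactOperator ⇑(A - B) := by
    exact TwoSidedIdeal.mem_mk' _ _ _ _ _ _ _
  rw [← h, ← TwoSidedIdeal.rel_iff]
  exact (RingCon.eq _).symm

/-- **Left semi-P-Fredholm operators.**
`T ∈ L(X)` is left semi-`P`-Fredholm for some idempotent `p = Π(P)` of the Calkin algebra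
(i.e. `Π(T)` is left `p`-invertible) if and only if there exists `S ∈ L(X)` such that
`STS − S`, `S²T − S`, `TST − ST²` are compact and there exists `V ∈ L(X)` with
`[V, ST]` and `V(I + T − ST) − I` compact.  Moreover, in that case `P` can be chosen
with `P − (I − ST)` compact. -/
theorem left_semi_P_Fredholm_characterization
    {X : Type*} [NormedAddCommGroup X] [NormedSpace ℂ X] [CompleteSpace X]
    (T : X →L[ℂ] X) :
    ((∃ P : X →L[ℂ] X, IsCompactOperator ⇑(P * P - P) ∧ IsCompactOperator ⇑(P * T - T * P) ∧
        ∃ U : X →L[ℂ] X, IsCompactOperator ⇑(U * P - P * U) ∧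
          IsCompactOperator ⇑(U * (T + P) - 1)) ↔
      (∃ S : X →L[ℂ] X, IsCompactOperator ⇑(S * T * S - S) ∧
        IsCompactOperator ⇑(S * S * T - S) ∧ IsCompactOperator ⇑(T * S * T - S * T * T) ∧
        ∃ V : X →L[ℂ] X, IsCompactOperator ⇑(V * (S * T) - (S * T) * V) ∧
          IsCompactOperator ⇑(V * (1 + T - S * T) - 1))) ∧
    (∀ S : X →L[ℂ] X, IsCompactOperator ⇑(S * T * S - S) →
      IsCompactOperator ⇑(S * S * T - S) → IsCompactOperator ⇑(T * S * T - S * T * T) →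
      (∃ V : X →L[ℂ] X, IsCompactOperator ⇑(V * (S * T) - (S * T) * V) ∧
        IsCompactOperator ⇑(V * (1 + T - S * T) - 1)) →
      ∃ P : X →L[ℂ] X, IsCompactOperator ⇑(P - (1 - S * T)) ∧
        IsCompactOperator ⇑(P * P - P) ∧ IsCompactOperator ⇑(P * T - T * P) ∧
        ∃ U : X →L[ℂ] X, IsCompactOperator ⇑(U * P - P * U) ∧
          IsCompactOperator ⇑(U * (T + P) - 1)) := by
  have key : ∀ S : X →L[ℂ] X, IsCompactOperator ⇑(S * T * S - S) →
      IsCompactOperator ⇑(S * S * T - S) → IsCompactOperator ⇑(T * S * T - S * T * T) →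
      (∃ V : X →L[ℂ] X, IsCompactOperator ⇑(V * (S * T) - (S * T) * V) ∧
        IsCompactOperator ⇑(V * (1 + T - S * T) - 1)) →
      ∃ P : X →L[ℂ] X, IsCompactOperator ⇑(P - (1 - S * T)) ∧
        IsCompactOperator ⇑(P * P - P) ∧ IsCompactOperator ⇑(P * T - T * P) ∧
        ∃ U : X →L[ℂ] X, IsCompactOperator ⇑(U * P - P * U) ∧
          IsCompactOperator ⇑(U * (T + P) - 1) := by
    rintro S h1 - h3 ⟨V, h4, h5⟩
    simp only [calkin_iff, map_mul, map_add, map_sub, map_one] at h1 h3 h4 h5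
    obtain ⟨a, b, c, d⟩ := calkin_alg1 h1 h3 h4 h5
    refine ⟨1 - S * T, ?_, ?_, ?_, V, ?_, ?_⟩ <;>
      simp only [calkin_iff, map_mul, map_add, map_sub, map_one] <;> assumption
  refine ⟨⟨?_, ?_⟩, key⟩
  · rintro ⟨P, h1, h2, U, h3, h4⟩
    simp only [calkin_iff, map_mul, map_add, map_one] at h1 h2 h3 h4
    obtain ⟨a, b, c, d, e⟩ := calkin_alg2 h1 h2 h3 h4
    refine ⟨U * (1 - P), ?_, ?_, ?_, U, ?_, ?_⟩ <;>
      simp only [calkin_iff, map_mul, map_add, map_sub, map_one] <;> assumption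
  · rintro ⟨S, h1, h2, h3, h4⟩
    obtain ⟨P, -, h⟩ := key S h1 h2 h3 h4
    exact ⟨P, h⟩
end

section
/- Let X be a complex Banach space and T ∈ L(X). The following are equivalent: (i) there exists P ∈ L(X) with P² − P compact and PT − TP compact, and there exists U ∈ L(X) with UP − PU compact and (T + P)U − I compact (i.e. the image of T in the Calkin algebra is right p-invertible for the idempotent p = Π(P)); (ii) there exists S ∈ L(X) such that STS − S, TS² − S and TST − T²S are all compact, and there exists V ∈ L(X) such that the commutator VTS − TSV and (I + T − TS)V − I are compact. Moreover, when (ii) holds, the operator P in (i) may be chosen so that P − (I − TS) is compact. -/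
/-- The two-sided ideal of compact operators. -/
noncomputable def cptIdeal (X : Type*) [NormedAddCommGroup X] [NormedSpace ℂ X] :
    TwoSidedIdeal (X →L[ℂ] X) :=
  TwoSidedIdeal.mk' {A : X →L[ℂ] X | IsCompactOperator ⇑A}
    (by simpa using isCompactOperator_zero)
    (fun {x y} hx hy => by
      have := IsCompactOperator.add hx hy
      simpa using this)
    (fun {x} hx => by
      have := IsCompactOperator.neg hx
      simpa using this)
    (fun {x y} hy => by
      have := IsCompactOperator.clm_comp (f := ⇑y) hy x
      simpa using this)
    (fun {x y} hx => by
      have := IsCompactOperator.comp_clm (f := ⇑x) hx y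
      simpa using this)

theorem cpt_iff {X : Type*} [NormedAddCommGroup X] [NormedSpace ℂ X] (A : X →L[ℂ] X) :
    IsCompactOperator ⇑A ↔ (cptIdeal X).ringCon.mk' A = 0 := by
  have h1 : IsCompactOperator ⇑A ↔ A ∈ cptIdeal X := by
    unfold cptIdeal
    rw [TwoSidedIdeal.mem_mk']
    rfl
  rw [h1, TwoSidedIdeal.mem_iff, ← RingCon.eq]
  rfl

theorem alg_mp {Q : Type*} [Ring Q] {t p u : Q} (h1 : p * p = p) (h2 : p * t = t * p)
    (h4 : (t + p) * u = 1) : t * ((1 - p) * u) = 1 - p := by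
  have e : t * ((1 - p) * u) = (1 - p) * ((t + p) * u) := by
    have : t * (1 - p) = (1 - p) * (t + p) := by
      simp only [mul_sub, sub_mul, mul_add, mul_one, one_mul, h1, h2]
      abel
    rw [← mul_assoc, this, mul_assoc]
  rw [e, h4, mul_one]

/-- **Right semi-P-Fredholm operators.**
`T ∈ L(X)` is right semi-`P`-Fredholm for some idempotent `p = Π(P)` of the Calkin algebra
(i.e. `Π(T)` is right `p`-invertible) if and only if there exists `S ∈ L(X)` such that
`STS − S`, `TS² − S`, `TST − T²S` are compact and there exists `V ∈ L(X)` with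
`[V, TS]` and `(I + T − TS)V − I` compact.  Moreover, in that case `P` can be chosen
with `P − (I − TS)` compact. -/
theorem right_semi_P_Fredholm_characterization
    {X : Type*} [NormedAddCommGroup X] [NormedSpace ℂ X] [CompleteSpace X]
    (T : X →L[ℂ] X) :
    ((∃ P : X →L[ℂ] X, IsCompactOperator ⇑(P * P - P) ∧ IsCompactOperator ⇑(P * T - T * P) ∧
        ∃ U : X →L[ℂ] X, IsCompactOperator ⇑(U * P - P * U) ∧
          IsCompactOperator ⇑((T + P) * U - 1)) ↔
      (∃ S : X →L[ℂ] X, IsCompactOperator ⇑(S * T * S - S) ∧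
        IsCompactOperator ⇑(T * S * S - S) ∧ IsCompactOperator ⇑(T * S * T - T * T * S) ∧
        ∃ V : X →L[ℂ] X, IsCompactOperator ⇑(V * (T * S) - (T * S) * V) ∧
          IsCompactOperator ⇑((1 + T - T * S) * V - 1))) ∧
    (∀ S : X →L[ℂ] X, IsCompactOperator ⇑(S * T * S - S) →
      IsCompactOperator ⇑(T * S * S - S) → IsCompactOperator ⇑(T * S * T - T * T * S) →
      (∃ V : X →L[ℂ] X, IsCompactOperator ⇑(V * (T * S) - (T * S) * V) ∧
        IsCompactOperator ⇑((1 + T - T * S) * V - 1)) →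
      ∃ P : X →L[ℂ] X, IsCompactOperator ⇑(P - (1 - T * S)) ∧
        IsCompactOperator ⇑(P * P - P) ∧ IsCompactOperator ⇑(P * T - T * P) ∧
        ∃ U : X →L[ℂ] X, IsCompactOperator ⇑(U * P - P * U) ∧
          IsCompactOperator ⇑((T + P) * U - 1)) := by
  simp only [cpt_iff, map_sub, map_mul, map_add, map_one, sub_eq_zero]
  set π := (cptIdeal X).ringCon.mk' with hπ
  have key : ∀ S : X →L[ℂ] X, π S * π T * π S = π S →
      π T * π S * π S = π S → π T * π S * π T = π T * π T * π S →
      (∃ V : X →L[ℂ] X, π V * (π T * π S) = (π T * π S) * π V ∧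
        (1 + π T - π T * π S) * π V = 1) →
      ∃ P : X →L[ℂ] X, π P = 1 - π T * π S ∧
        π P * π P = π P ∧ π P * π T = π T * π P ∧
        ∃ U : X →L[ℂ] X, π U * π P = π P * π U ∧ (π T + π P) * π U = 1 := by
    rintro S h1 h2 h3 ⟨V, h4, h5⟩
    refine ⟨1 - T * S, ?_, ?_, ?_, V, ?_, ?_⟩ <;> simp only [map_sub, map_mul, map_one]
    · have : π T * π S * (π T * π S) = π T * π S := by
        rw [mul_assoc, ← mul_assoc (π S), h1]
      simp only [mul_sub, sub_mul, mul_one, one_mul, this]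
      abel
    · simp only [mul_sub, sub_mul, mul_one, one_mul, h3, mul_assoc]
    · simp only [mul_sub, sub_mul, mul_one, one_mul, h4]
    · refine Eq.trans ?_ h5
      congr 1
      abel
  refine ⟨⟨?_, ?_⟩, key⟩
  · rintro ⟨P, h1, h2, U, h3, h4⟩
    have e := alg_mp h1 h2 h4
    have hq : (1 - π P) * (1 - π P) = 1 - π P := by
      simp only [mul_sub, sub_mul, mul_one, one_mul, h1]
      abel
    have hu : π U * (1 - π P) = (1 - π P) * π U := by
      simp only [mul_sub, sub_mul, mul_one, one_mul, h3]
    refine ⟨(1 - P) * U, ?_, ?_, ?_, U, ?_, ?_⟩ <;> simp only [map_sub, map_mul, map_one]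
    · rw [mul_assoc _ (π T), e, mul_assoc, hu, ← mul_assoc, hq]
    · rw [e, ← mul_assoc, hq]
    · rw [mul_assoc (π T) (π T), e]
      simp only [mul_sub, sub_mul, mul_one, one_mul, h2]
    · rw [e, hu]
    · rw [e]
      refine Eq.trans ?_ h4
      congr 1
      abel
  · rintro ⟨S, h1, h2, h3, hV⟩
    obtain ⟨P, -, h⟩ := key S h1 h2 h3 hV
    exact ⟨P, h⟩
end

section
/- Let X be a complex Banach space, T ∈ L(X), and P ∈ L(X) with P² − P compact and PT − TP compact. Then there exists W ∈ L(X) with W(T + P) − I and (T + P)W − I compact if and only if both of the following hold: there exists U ∈ L(X) with UP − PU compact and U(T + P) − I compact, and there exists V ∈ L(X) with VP − PV compact and (T + P)V − I compact. (In other words, T is P-Fredholm if and only if T is both left semi-P-Fredholm and right semi-P-Fredholm.) -/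
/-- **P-Fredholm = left semi-P-Fredholm ∧ right semi-P-Fredholm.**
Given `P ∈ L(X)` with `P² − P` and `PT − TP` compact (so that `p = Π(P)` is an idempotent
of the Calkin algebra commuting with `Π(T)`), `T` is `P`-Fredholm (i.e. `Π(T) + p` is
invertible) if and only if `T` is both left and right semi-`P`-Fredholm. -/
theorem P_Fredholm_iff_left_and_right
    {X : Type*} [NormedAddCommGroup X] [NormedSpace ℂ X] [CompleteSpace X]
    (T P : X →L[ℂ] X) (hP : IsCompactOperator ⇑(P * P - P))
    (hPT : IsCompactOperator ⇑(P * T - T * P)) :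
    (∃ W : X →L[ℂ] X, IsCompactOperator ⇑(W * (T + P) - 1) ∧
        IsCompactOperator ⇑((T + P) * W - 1)) ↔
      ((∃ U : X →L[ℂ] X, IsCompactOperator ⇑(U * P - P * U) ∧
          IsCompactOperator ⇑(U * (T + P) - 1)) ∧
        (∃ V : X →L[ℂ] X, IsCompactOperator ⇑(V * P - P * V) ∧
          IsCompactOperator ⇑((T + P) * V - 1))) := by
  have L : ∀ A B : X →L[ℂ] X, IsCompactOperator ⇑B → IsCompactOperator ⇑(A * B) :=
    fun A B h => h.clm_comp A
  have R : ∀ A B : X →L[ℂ] X, IsCompactOperator ⇑A → IsCompactOperator ⇑(A * B) :=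
    fun A B h => h.comp_clm B
  have S : ∀ A B : X →L[ℂ] X, IsCompactOperator ⇑A → IsCompactOperator ⇑B →
      IsCompactOperator ⇑(A + B) := fun A B h k => h.add k
  have D : ∀ A B : X →L[ℂ] X, IsCompactOperator ⇑A → IsCompactOperator ⇑B →
      IsCompactOperator ⇑(A - B) := fun A B h k => h.sub k
  constructor
  · rintro ⟨W, h1, h2⟩
    have key : IsCompactOperator ⇑(W * P - P * W) := by
      have e : W * P - P * W = W * (P * T - T * P) * W + (W * (T + P) - 1) * (P * W)
          - W * P * ((T + P) * W - 1) := by noncomm_ring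
      rw [e]
      exact D _ _ (S _ _ (R _ _ (L _ _ hPT)) (R _ _ h1)) (L _ _ h2)
    exact ⟨⟨W, key, h1⟩, ⟨W, key, h2⟩⟩
  · rintro ⟨⟨U, -, h1⟩, ⟨V, -, h2⟩⟩
    refine ⟨U, h1, ?_⟩
    have e : (T + P) * U - 1 = (T + P) * (U * (T + P) - 1) * V + ((T + P) * V - 1)
        - (T + P) * U * ((T + P) * V - 1) := by noncomm_ring
    rw [e]
    exact D _ _ (S _ _ (R _ _ (L _ _ h1)) h2) (L _ _ h2)
end

section
/- Let A be a complex unital Banach algebra with unit e and let a ∈ A be left generalized Drazin invertible, i.e. there is an idempotent p ∈ A with ap = pa, ap quasinilpotent, and an element b ∈ A with bp = pb and b(a + p) = e. Then there exists ε > 0 such that for every λ ∈ ℂ with 0 < |λ| < ε, the element a − λe is left invertible in A. -/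
/-- If `a` is left generalized Drazin invertible in a complex unital Banach algebra `A`
(there is an idempotent `p` commuting with `a`, with `ap` quasinilpotent and `a + p`
left invertible in the commutant of `p`), then `a − λ·1` is left invertible for all
`λ ≠ 0` of sufficiently small modulus. -/
theorem left_generalized_Drazin_left_invertible_near_zero
    {A : Type*} [NormedRing A] [NormedAlgebra ℂ A] [CompleteSpace A]
    (a p b : A) (hp : p * p = p) (hpa : a * p = p * a)
    (hq : spectralRadius ℂ (a * p) = 0)
    (hbp : b * p = p * b) (hb : b * (a + p) = 1) :
    ∃ ε : ℝ, 0 < ε ∧ ∀ lam : ℂ, lam ≠ 0 → ‖lam‖ < ε →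
      ∃ y : A, y * (a - lam • (1 : A)) = 1 := by
  have hb0 : (0 : ℝ) < ‖b‖ + 1 := by positivity
  refine ⟨1 / (‖b‖ + 1), by positivity, fun lam hl hlt => ?_⟩
  have h1 : IsUnit (1 - lam • b) := by
    apply isUnit_one_sub_of_norm_lt_one
    rw [norm_smul]
    rw [lt_div_iff₀ hb0] at hlt
    nlinarith [norm_nonneg lam, norm_nonneg b]
  have h2 : lam ∈ resolventSet ℂ (a * p) := by
    apply spectrum.mem_resolventSet_of_spectralRadius_lt
    rw [hq]
    simpa using hl
  rw [spectrum.mem_resolventSet_iff] at h2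
  obtain ⟨c, hc⟩ := h1.exists_left_inv
  obtain ⟨w, hw⟩ := h2.exists_left_inv
  rw [Algebra.algebraMap_eq_smul_one] at hw
  have e1 : p * (a - lam • (1 : A)) = -((lam • (1 : A) - a * p) * p) := by
    rw [sub_mul, mul_assoc a, hp, hpa, mul_sub]
    simp
  have e2 : (1 - p) * (a - lam • (1 : A)) = (a + p - lam • (1 : A)) * (1 - p) := by
    simp only [sub_mul, mul_sub, add_mul, one_mul, mul_one, hp, hpa, smul_mul_assoc,
      mul_smul_comm, smul_sub]
    abel
  have e3 : b * (a + p - lam • (1 : A)) = 1 - lam • b := by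
    rw [mul_sub, hb]
    simp
  refine ⟨-(w * p) + c * b * (1 - p), ?_⟩
  rw [add_mul, neg_mul, mul_assoc w, e1, mul_neg, neg_neg, ← mul_assoc w, hw,
    mul_assoc (c * b), e2, ← mul_assoc (c * b), mul_assoc c, e3, hc]
  simp
end

section
/- Let A be a complex unital Banach algebra with unit e and let a ∈ A be right generalized Drazin invertible, i.e. there is an idempotent p ∈ A with ap = pa, ap quasinilpotent, and an element b ∈ A with bp = pb and (a + p)b = e. Then there exists ε > 0 such that for every λ ∈ ℂ with 0 < |λ| < ε, the element a − λe is right invertible in A. -/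
/-- If `a` is right generalized Drazin invertible in a complex unital Banach algebra `A`
(there is an idempotent `p` commuting with `a`, with `ap` quasinilpotent and `a + p`
right invertible in the commutant of `p`), then `a − λ·1` is right invertible for all
`λ ≠ 0` of sufficiently small modulus. -/
theorem right_generalized_Drazin_right_invertible_near_zero
    {A : Type*} [NormedRing A] [NormedAlgebra ℂ A] [CompleteSpace A]
    (a p b : A) (hp : p * p = p) (hpa : a * p = p * a)
    (hq : spectralRadius ℂ (a * p) = 0)
    (hbp : b * p = p * b) (hb : (a + p) * b = 1) :
    ∃ ε : ℝ, 0 < ε ∧ ∀ lam : ℂ, lam ≠ 0 → ‖lam‖ < ε →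
      ∃ y : A, (a - lam • (1 : A)) * y = 1 := by
  have hb0 : 0 < ‖b‖ + 1 := by positivity
  refine ⟨1 / (‖b‖ + 1), by positivity, fun lam hl hlt => ?_⟩
  have h1 : IsUnit (algebraMap ℂ A lam - a * p) := by
    have : lam ∈ resolventSet ℂ (a * p) := by
      apply spectrum.mem_resolventSet_of_spectralRadius_lt
      rw [hq]
      simpa using hl
    exact this
  have h2 : IsUnit (1 - lam • b) := by
    apply isUnit_one_sub_of_norm_lt_one
    rw [norm_smul]
    rw [lt_div_iff₀ hb0] at hlt
    nlinarith [norm_nonneg lam, norm_nonneg b]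
  obtain ⟨c, hc⟩ := h1.exists_right_inv
  obtain ⟨u, hu⟩ := h2.exists_right_inv
  rw [Algebra.algebraMap_eq_smul_one] at hc
  have e1 : (a - lam • (1 : A)) * p = -(p * (lam • (1 : A) - a * p)) := by
    simp only [mul_sub, sub_mul, smul_mul_assoc, mul_smul_comm, one_mul, mul_one]
    rw [hpa, ← mul_assoc, hp]
    abel
  have e2 : (a - lam • (1 : A)) * (1 - p) * b = (1 - p) * (1 - lam • b) := by
    have : (a - lam • (1 : A)) * (1 - p) = (1 - p) * ((a + p) - lam • (1 : A)) := by
      simp only [mul_sub, sub_mul, mul_add, smul_sub, smul_mul_assoc, mul_smul_comm, one_mul, mul_one]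
      rw [hpa, hp]
      abel
    rw [this, mul_assoc, sub_mul (a + p), hb, smul_mul_assoc, one_mul]
  refine ⟨-(p * c) + (1 - p) * b * u, ?_⟩
  rw [mul_add, mul_neg, ← mul_assoc, ← mul_assoc, ← mul_assoc, e1, e2, mul_assoc (1 - p), hu,
    neg_mul, mul_assoc p, hc]
  simp
end

section
/- Let A be a complex unital Banach algebra with unit e and let a ∈ A. Then a is generalized Drazin invertible (there is an idempotent p ∈ A with ap = pa, ap quasinilpotent, and a + p invertible in A) if and only if a is both left generalized Drazin invertible (there is an idempotent p₁ with ap₁ = p₁a, ap₁ quasinilpotent, and b₁ ∈ A with b₁p₁ = p₁b₁ and b₁(a + p₁) = e) and right generalized Drazin invertible (there is an idempotent p₂ with ap₂ = p₂a, ap₂ quasinilpotent, and b₂ ∈ A with b₂p₂ = p₂b₂ and (a + p₂)b₂ = e). -/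
open Filter Topology in
theorem qn_eventually {A : Type*} [NormedRing A] [NormedAlgebra ℂ A] [CompleteSpace A] (q : A)
    (hq : spectralRadius ℂ q = 0) (r : NNReal) (hr : 0 < r) :
    ∀ᶠ n : ℕ in atTop, ‖q ^ n‖ ≤ (r : ℝ) ^ n := by
  have h := spectrum.pow_nnnorm_pow_one_div_tendsto_nhds_spectralRadius q
  rw [hq] at h
  have h2 := h.eventually_lt_const (ENNReal.coe_pos.2 hr)
  filter_upwards [h2, eventually_gt_atTop 0] with n hn hn0
  have hn1 : (0 : ℝ) < n := by exact_mod_cast hn0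
  have h3 := ENNReal.rpow_le_rpow hn.le hn1.le
  rw [← ENNReal.rpow_mul, one_div_mul_cancel hn1.ne', ENNReal.rpow_one, ENNReal.rpow_natCast] at h3
  exact_mod_cast h3

open Filter Topology in
theorem qn_zero {A : Type*} [NormedRing A] [NormedAlgebra ℂ A] [CompleteSpace A] (q x z : A)
    (hq : spectralRadius ℂ q = 0) (h : ∀ n : ℕ, 0 < n → ‖z‖ ≤ ‖x‖ ^ n * ‖q ^ n‖) : z = 0 := by
  have hx : (0 : ℝ) < 2 * (‖x‖ + 1) := by positivity
  have ev := qn_eventually q hq (2 * (‖x‖₊ + 1))⁻¹ (by positivity)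
  push_cast at ev
  have lim : Tendsto (fun n : ℕ => ((1 / 2 : ℝ)) ^ n) atTop (𝓝 0) :=
    tendsto_pow_atTop_nhds_zero_of_lt_one (by norm_num) (by norm_num)
  have : ‖z‖ ≤ 0 := by
    refine ge_of_tendsto lim ?_
    filter_upwards [ev, eventually_gt_atTop 0] with n hn hn0
    refine (h n hn0).trans ?_
    refine (mul_le_mul_of_nonneg_left hn (by positivity)).trans ?_
    rw [← mul_pow]
    refine pow_le_pow_left₀ (by positivity) ?_ n
    rw [← div_eq_mul_inv, div_le_iff₀ hx]
    linarith
  exact norm_le_zero_iff.1 this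

theorem xpow_apow {R : Type*} [Ring R] (x a q : R) (hxa : x * a = q) (hxq : x * q = x)
    (n : ℕ) : x ^ (n + 1) * a ^ (n + 1) = q := by
  induction n with
  | zero => simpa using hxa
  | succ n ih =>
    calc x ^ (n + 1 + 1) * a ^ (n + 1 + 1)
        = x ^ n * (x * (x * a)) * a ^ (n + 1) := by
          rw [pow_succ x (n+1), pow_succ x n, pow_succ' a (n+1)]; noncomm_ring
      _ = q := by rw [hxa, hxq, ← pow_succ, ih]

theorem apow_ypow {R : Type*} [Ring R] (y a q : R) (hay : a * y = q) (hqy : q * y = y)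
    (n : ℕ) : a ^ (n + 1) * y ^ (n + 1) = q := by
  induction n with
  | zero => simpa using hay
  | succ n ih =>
    calc a ^ (n + 1 + 1) * y ^ (n + 1 + 1)
        = a ^ (n + 1) * ((a * y) * y) * y ^ n := by
          rw [pow_succ' y (n+1), pow_succ' y n, pow_succ a (n+1)]; noncomm_ring
      _ = q := by rw [hay, hqy, mul_assoc, ← pow_succ', ih]

/-- **Generalized Drazin invertibility = left ∧ right generalized Drazin invertibility.**
An element `a` of a complex unital Banach algebra is generalized Drazin invertible if and
only if it is both left generalized Drazin invertible and right generalized Drazin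
invertible. -/
theorem generalized_Drazin_iff_left_and_right
    {A : Type*} [NormedRing A] [NormedAlgebra ℂ A] [CompleteSpace A] (a : A) :
    (∃ p : A, p * p = p ∧ a * p = p * a ∧ spectralRadius ℂ (a * p) = 0 ∧ IsUnit (a + p)) ↔
    ((∃ p₁ : A, p₁ * p₁ = p₁ ∧ a * p₁ = p₁ * a ∧ spectralRadius ℂ (a * p₁) = 0 ∧
        ∃ b₁ : A, b₁ * p₁ = p₁ * b₁ ∧ b₁ * (a + p₁) = 1) ∧
      (∃ p₂ : A, p₂ * p₂ = p₂ ∧ a * p₂ = p₂ * a ∧ spectralRadius ℂ (a * p₂) = 0 ∧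
        ∃ b₂ : A, b₂ * p₂ = p₂ * b₂ ∧ (a + p₂) * b₂ = 1)) := by
  constructor
  · rintro ⟨p, hp, hap, hs, u, hu⟩
    have hc : Commute (u : A) p := by
      rw [hu]; exact (show Commute a p from hap).add_left (Commute.refl p)
    have hb : (↑u⁻¹ : A) * p = p * ↑u⁻¹ := hc.units_inv_left
    exact ⟨⟨p, hp, hap, hs, ↑u⁻¹, hb, by rw [← hu]; simp⟩,
      ⟨p, hp, hap, hs, ↑u⁻¹, hb, by rw [← hu]; simp⟩⟩
  · rintro ⟨⟨p, hp, hap, hs, b, hb, hba⟩, ⟨r, hr, har, hsr, c, hc, hca⟩⟩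
    have hpi : IsIdempotentElem p := hp
    have hri : IsIdempotentElem r := hr
    have hxa : (b * (1 - p)) * a = 1 - p := by
      have : (b * (1 - p)) * a = (b * (a + p)) * (1 - p) := by
        rw [mul_assoc, mul_assoc, add_mul, mul_sub p, hp, sub_mul, mul_sub a, hap]; simp
      rw [this, hba, one_mul]
    have hxq : (b * (1 - p)) * (1 - p) = b * (1 - p) := by
      rw [mul_assoc, hpi.one_sub.eq]
    have hay : a * ((1 - r) * c) = 1 - r := by
      have : a * ((1 - r) * c) = (1 - r) * ((a + r) * c) := by
        rw [← mul_assoc, ← mul_assoc, mul_add, sub_mul 1 r r, hr, sub_mul, mul_sub, har]; simp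
      rw [this, hca, mul_one]
    have hqy : (1 - r) * ((1 - r) * c) = (1 - r) * c := by
      rw [← mul_assoc, hri.one_sub.eq]
    have h1 : (1 - p) * r = 0 := by
      refine qn_zero (a * r) (b * (1 - p)) _ hsr ?_
      rintro (_ | n) hn
      · omega
      have e : (1 - p) * r = (b * (1 - p)) ^ (n + 1) * (a * r) ^ (n + 1) := by
        rw [(show Commute a r from har).mul_pow, hri.pow_succ_eq, ← mul_assoc,
          xpow_apow _ _ _ hxa hxq]
      rw [e]
      exact (norm_mul_le _ _).trans
        (mul_le_mul_of_nonneg_right (norm_pow_le' _ hn) (norm_nonneg _))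
    have h2 : p * (1 - r) = 0 := by
      refine qn_zero (a * p) ((1 - r) * c) _ hs ?_
      rintro (_ | n) hn
      · omega
      have e : p * (1 - r) = (a * p) ^ (n + 1) * ((1 - r) * c) ^ (n + 1) := by
        rw [hap, (show Commute p a from hap.symm).mul_pow, hpi.pow_succ_eq, mul_assoc,
          apow_ypow _ _ _ hay hqy]
      rw [e, mul_comm (‖_‖ ^ _)]
      exact (norm_mul_le _ _).trans
        (mul_le_mul_of_nonneg_left (norm_pow_le' _ hn) (norm_nonneg _))
    have hpr : p = r := by
      rw [sub_mul, one_mul, sub_eq_zero] at h1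
      rw [mul_sub, mul_one, sub_eq_zero] at h2
      rw [h2, ← h1]
    subst hpr
    refine ⟨p, hp, hap, hs, ?_⟩
    have hbc : b = c := left_inv_eq_right_inv hba hca
    exact ⟨⟨a + p, b, by rw [hbc, hca], hba⟩, rfl⟩
end

section
/- Let X be a complex Banach space and T ∈ L(X). The following are equivalent: (1) T is a weak B-Fredholm operator, i.e. there exists P ∈ L(X) with P² − P compact, PT − TP compact, (PT)ᵐ compact for some integer m ≥ 1, and there exists W ∈ L(X) with W(T + P) − I and (T + P)W − I compact; (2) T is both a left and a right weak semi-B-Fredholm operator, i.e. there exist P₁ ∈ L(X) with P₁² − P₁ compact, P₁T − TP₁ compact, (P₁T)ⁿ compact for some n ≥ 1, and S₁ ∈ L(X) with S₁P₁ − P₁S₁ compact and S₁(T + P₁) − I compact, and there exist P₂ ∈ L(X) with P₂² − P₂ compact, P₂T − TP₂ compact, (P₂T)ᵏ compact for some k ≥ 1, and S₂ ∈ L(X) with S₂P₂ − P₂S₂ compact and (T + P₂)S₂ − I compact. -/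
theorem wbf_eq_aux {A : Type*} [Ring A] {t p s : A} (hpp : p * p = p) (hpt : p * t = t * p)
    (hsp : s * p = p * s) (h : s * (t + p) = 1) (m : ℕ) : s ^ m * (1 - p) * t ^ m = 1 - p := by
  have hst : s * (1 - p) * t = 1 - p := by
    have h1 : s * (t + p) * (1 - p) = 1 - p := by rw [h, one_mul]
    have h2 : (t + p) * (1 - p) = (1 - p) * t := by
      simp only [mul_sub, sub_mul, add_mul, mul_one, one_mul, hpp, hpt]; abel
    rw [mul_assoc, h2, ← mul_assoc] at h1
    exact h1
  induction m with
  | zero => simp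
  | succ m ih =>
    calc s ^ (m + 1) * (1 - p) * t ^ (m + 1)
        = s ^ m * (s * (1 - p) * t) * t ^ m := by
          rw [pow_succ s, pow_succ' t]; simp only [mul_assoc]
      _ = _ := by rw [hst, ih]

theorem wbf_eq_aux' {A : Type*} [Ring A] {t p s : A} (hpp : p * p = p) (hpt : p * t = t * p)
    (hsp : s * p = p * s) (h : (t + p) * s = 1) (m : ℕ) : t ^ m * (1 - p) * s ^ m = 1 - p := by
  have hst : t * (1 - p) * s = 1 - p := by
    have h1 : (1 - p) * ((t + p) * s) = 1 - p := by rw [h, mul_one]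
    have h2 : (1 - p) * (t + p) = t * (1 - p) := by
      simp only [mul_sub, sub_mul, mul_add, mul_one, one_mul, hpp, hpt]; abel
    rw [← mul_assoc, h2] at h1
    exact h1
  induction m with
  | zero => simp
  | succ m ih =>
    calc t ^ (m + 1) * (1 - p) * s ^ (m + 1)
        = t ^ m * (t * (1 - p) * s) * s ^ m := by
          rw [pow_succ t, pow_succ' s]; simp only [mul_assoc]
      _ = _ := by rw [hst, ih]

theorem wbf_nil {A : Type*} [Ring A] {t p : A} (hpp : p * p = p) (hpt : p * t = t * p)
    {n : ℕ} (hn : 1 ≤ n) (h : (p * t) ^ n = 0) : p * t ^ n = 0 := by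
  obtain ⟨k, rfl⟩ : ∃ k, n = k + 1 := ⟨n - 1, by omega⟩
  have hc : Commute p t := hpt
  rw [hc.mul_pow, IsIdempotentElem.pow_succ_eq k hpp] at h
  exact h

theorem wbf_ring {A : Type*} [Ring A] {t p s q r : A} (hpp : p * p = p) (hpt : p * t = t * p)
    (hpn : ∃ n : ℕ, 1 ≤ n ∧ (p * t) ^ n = 0)
    (hsp : s * p = p * s) (hs : s * (t + p) = 1)
    (hqq : q * q = q) (hqt : q * t = t * q)
    (hqn : ∃ n : ℕ, 1 ≤ n ∧ (q * t) ^ n = 0)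
    (hrq : r * q = q * r) (hr : (t + q) * r = 1) : (t + p) * s = 1 := by
  obtain ⟨n, hn, hpn⟩ := hpn
  obtain ⟨k, hk, hqn⟩ := hqn
  have h1 := wbf_nil hpp hpt hn hpn
  have h2 := wbf_nil hqq hqt hk hqn
  have h2' : t ^ k * q = 0 := by
    have hc : Commute q t := hqt
    rw [← (hc.pow_right k).eq, h2]
  have h3 : (1 - p) * q = 0 := by
    rw [← wbf_eq_aux hpp hpt hsp hs k, mul_assoc, h2', mul_zero]
  have h4 : p * (1 - q) = 0 := by
    rw [← wbf_eq_aux' hqq hqt hrq hr n, ← mul_assoc, ← mul_assoc, h1, zero_mul, zero_mul]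
  have h5 : p = q := by
    rw [sub_mul, one_mul, sub_eq_zero] at h3
    rw [mul_sub, mul_one, sub_eq_zero] at h4
    rw [h4, ← h3]
  subst h5
  have : s = r := left_inv_eq_right_inv hs hr
  rw [this, hr]

/-- The ideal of compact operators. -/
def wbfIdeal (X : Type*) [NormedAddCommGroup X] [NormedSpace ℂ X] :
    TwoSidedIdeal (X →L[ℂ] X) :=
  TwoSidedIdeal.mk' {f | IsCompactOperator ⇑f} isCompactOperator_zero
    (fun hx hy => IsCompactOperator.add hx hy) (fun hx => IsCompactOperator.neg hx)
    (fun {x _} hy => IsCompactOperator.clm_comp hy x) (fun {_ y} hx => IsCompactOperator.comp_clm hx y)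

theorem wbf_exists_quot.{u} (X : Type u) [NormedAddCommGroup X] [NormedSpace ℂ X] :
    ∃ (A : Type u) (_ : Ring A) (φ : (X →L[ℂ] X) →+* A),
      ∀ f : X →L[ℂ] X, IsCompactOperator ⇑f ↔ φ f = 0 := by
  refine ⟨(wbfIdeal X).ringCon.Quotient, inferInstance, (wbfIdeal X).ringCon.mk', fun f => ?_⟩
  have h : f ∈ wbfIdeal X ↔ IsCompactOperator ⇑f := by
    exact TwoSidedIdeal.mem_mk' _ _ _ _ _ _ f
  rw [← h, TwoSidedIdeal.mem_iff, ← RingCon.eq]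
  rfl

/-- **Weak B-Fredholm = left weak semi-B-Fredholm ∧ right weak semi-B-Fredholm.**
`T` is weak B-Fredholm (i.e. `Π(T)` is Drazin invertible in the Calkin algebra) if and
only if it is both a left and a right weak semi-B-Fredholm operator. -/
theorem weak_B_Fredholm_iff_left_and_right
    {X : Type*} [NormedAddCommGroup X] [NormedSpace ℂ X] [CompleteSpace X]
    (T : X →L[ℂ] X) :
    (∃ P : X →L[ℂ] X, IsCompactOperator ⇑(P * P - P) ∧ IsCompactOperator ⇑(P * T - T * P) ∧
        (∃ m : ℕ, 1 ≤ m ∧ IsCompactOperator ⇑((P * T) ^ m)) ∧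
        ∃ W : X →L[ℂ] X, IsCompactOperator ⇑(W * (T + P) - 1) ∧
          IsCompactOperator ⇑((T + P) * W - 1)) ↔
    ((∃ P₁ : X →L[ℂ] X, IsCompactOperator ⇑(P₁ * P₁ - P₁) ∧
        IsCompactOperator ⇑(P₁ * T - T * P₁) ∧
        (∃ n : ℕ, 1 ≤ n ∧ IsCompactOperator ⇑((P₁ * T) ^ n)) ∧
        ∃ S₁ : X →L[ℂ] X, IsCompactOperator ⇑(S₁ * P₁ - P₁ * S₁) ∧
          IsCompactOperator ⇑(S₁ * (T + P₁) - 1)) ∧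
      (∃ P₂ : X →L[ℂ] X, IsCompactOperator ⇑(P₂ * P₂ - P₂) ∧
        IsCompactOperator ⇑(P₂ * T - T * P₂) ∧
        (∃ k : ℕ, 1 ≤ k ∧ IsCompactOperator ⇑((P₂ * T) ^ k)) ∧
        ∃ S₂ : X →L[ℂ] X, IsCompactOperator ⇑(S₂ * P₂ - P₂ * S₂) ∧
          IsCompactOperator ⇑((T + P₂) * S₂ - 1))) := by
  obtain ⟨A, _, φ, hφ⟩ := wbf_exists_quot X
  simp only [hφ, map_sub, map_mul, map_add, map_pow, map_one, sub_eq_zero]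
  constructor
  · rintro ⟨P, hpp, hpt, hn, W, h1, h2⟩
    have hc : Commute (φ P) (φ T + φ P) := (show Commute (φ P) (φ T) from hpt).add_right rfl
    have hw : φ W * φ P = φ P * φ W := by
      calc φ W * φ P = φ W * φ P * ((φ T + φ P) * φ W) := by rw [h2, mul_one]
        _ = φ W * (φ P * (φ T + φ P)) * φ W := by simp only [mul_assoc]
        _ = (φ W * (φ T + φ P)) * φ P * φ W := by rw [hc.eq]; simp only [mul_assoc]
        _ = _ := by rw [h1, one_mul]
    exact ⟨⟨P, hpp, hpt, hn, W, hw, h1⟩, ⟨P, hpp, hpt, hn, W, hw, h2⟩⟩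
  · rintro ⟨⟨P, hpp, hpt, hn, S, hs, h1⟩, ⟨Q, hqq, hqt, hk, R, hr, h2⟩⟩
    exact ⟨P, hpp, hpt, hn, S, h1, wbf_ring hpp hpt hn hs h1 hqq hqt hk hr h2⟩
end

section
/- Let A be a complex unital Banach algebra with unit e, let a ∈ A, and let p, p₀ ∈ A be idempotents such that ap = pa, ap₀ = p₀a, pp₀ = p₀p, (ap₀)ⁿ = 0 for some integer n ≥ 1, ap is quasinilpotent, and there exists b ∈ A with bp₀ = p₀b and b(a + p₀) = e. Then p(e − p₀) = 0 and aⁿp = 0. In particular ap is nilpotent. -/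
theorem aux_quasi {A : Type*} [NormedRing A] [NormedAlgebra ℂ A] [CompleteSpace A]
    (x : A) (hq : spectralRadius ℂ x = 0) (ε : ℝ) (hε : 0 < ε) :
    ∀ᶠ k : ℕ in Filter.atTop, ‖x ^ k‖ ≤ ε ^ k := by
  have h := spectrum.pow_norm_pow_one_div_tendsto_nhds_spectralRadius x
  rw [hq] at h
  have h2 := h.eventually (gt_mem_nhds (ENNReal.ofReal_pos.2 hε))
  filter_upwards [h2, Filter.eventually_ge_atTop 1] with k hk hk1
  have h3 := (ENNReal.ofReal_lt_ofReal_iff hε).1 hk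
  have hk0 : (k : ℝ) ≠ 0 := by positivity
  calc ‖x ^ k‖ = (‖x ^ k‖ ^ (1 / (k : ℝ))) ^ k := by
        rw [← Real.rpow_natCast, ← Real.rpow_mul (norm_nonneg _), one_div_mul_cancel hk0,
          Real.rpow_one]
    _ ≤ ε ^ k := pow_le_pow_left₀ (by positivity) h3.le k


/-- Key lemma in the proof that Drazin invertibility is equivalent to left and right
Drazin invertibility: if `p, p₀` are commuting idempotents commuting with `a`, with
`(ap₀)ⁿ = 0`, `ap` quasinilpotent, and `a + p₀` left invertible in the commutant of `p₀`,
then `p(e − p₀) = 0` and `aⁿp = 0`; in particular `ap` is nilpotent. -/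
theorem idempotent_annihilation_of_left_Drazin
    {A : Type*} [NormedRing A] [NormedAlgebra ℂ A] [CompleteSpace A]
    (a p p₀ : A) (hp : p * p = p) (hp₀ : p₀ * p₀ = p₀)
    (hap : a * p = p * a) (hap₀ : a * p₀ = p₀ * a) (hpp₀ : p * p₀ = p₀ * p)
    (n : ℕ) (hn : 1 ≤ n) (hnil : (a * p₀) ^ n = 0)
    (hq : spectralRadius ℂ (a * p) = 0)
    (b : A) (hbp₀ : b * p₀ = p₀ * b) (hb : b * (a + p₀) = 1) :
    p * (1 - p₀) = 0 ∧ a ^ n * p = 0 := by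
  have hc : Commute a p := hap
  have hc0 : Commute a p₀ := hap₀
  have hq1 : p * (1 - p₀) = 0 := by
    have hcq : Commute a (p * (1 - p₀)) := hc.mul_right ((Commute.one_right a).sub_right hc0)
    have hbase : b * a * (p * (1 - p₀)) = p * (1 - p₀) := by
      have h0 : p₀ * (p * (1 - p₀)) = 0 := by
        rw [← mul_assoc, ← hpp₀, mul_assoc, mul_sub, hp₀, mul_one, sub_self, mul_zero]
      calc b * a * (p * (1 - p₀)) = b * (a + p₀) * (p * (1 - p₀)) - b * (p₀ * (p * (1 - p₀))) := by
            noncomm_ring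
        _ = _ := by rw [hb, h0, mul_zero, sub_zero, one_mul]
    have hk : ∀ k : ℕ, b ^ k * (a ^ k * (p * (1 - p₀))) = p * (1 - p₀) := by
      intro k
      induction k with
      | zero => simp
      | succ k ih =>
        calc b ^ (k+1) * (a ^ (k+1) * (p * (1 - p₀)))
            = b ^ k * (b * a * (a ^ k * (p * (1 - p₀)))) := by
              rw [pow_succ, pow_succ']; simp only [mul_assoc]
          _ = b ^ k * (b * a * (p * (1 - p₀)) * a ^ k) := by
              rw [(hcq.pow_left k).eq]; simp only [mul_assoc]
          _ = p * (1 - p₀) := by rw [hbase, ← (hcq.pow_left k).eq, ih]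
    have hε : 0 < 1 / (2 * (‖b‖ + 1)) := by positivity
    have hev := aux_quasi (a * p) hq _ hε
    have hlim : Filter.Tendsto (fun k : ℕ => (1 / 2 : ℝ) ^ k * ‖1 - p₀‖) Filter.atTop (nhds 0) := by
      simpa using (tendsto_pow_atTop_nhds_zero_of_lt_one (r := (1 / 2 : ℝ))
        (by norm_num) (by norm_num)).mul_const ‖1 - p₀‖
    have hle : ‖p * (1 - p₀)‖ ≤ 0 := by
      refine ge_of_tendsto hlim ?_
      filter_upwards [hev, Filter.eventually_ge_atTop 1] with k h1 h2
      have hpk : p ^ k = p := IsIdempotentElem.pow_eq hp (by omega)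
      have e : p * (1 - p₀) = b ^ k * ((a * p) ^ k * (1 - p₀)) := by
        rw [hc.mul_pow, hpk, mul_assoc, hk]
      calc ‖p * (1 - p₀)‖ = ‖b ^ k * ((a * p) ^ k * (1 - p₀))‖ := by rw [← e]
        _ ≤ ‖b ^ k‖ * (‖(a * p) ^ k‖ * ‖1 - p₀‖) :=
            (norm_mul_le _ _).trans (by gcongr; exact norm_mul_le _ _)
        _ ≤ ‖b‖ ^ k * ((1 / (2 * (‖b‖ + 1))) ^ k * ‖1 - p₀‖) := by
            gcongr
            exact norm_pow_le' b h2
        _ = (‖b‖ * (1 / (2 * (‖b‖ + 1)))) ^ k * ‖1 - p₀‖ := by rw [mul_pow, mul_assoc]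
        _ ≤ (1 / 2) ^ k * ‖1 - p₀‖ := by
            gcongr
            rw [mul_one_div, div_le_div_iff₀ (by positivity) (by norm_num)]
            linarith
    exact norm_le_zero_iff.1 hle
  refine ⟨hq1, ?_⟩
  have hpe : p = p₀ * p := by
    rw [mul_sub, mul_one, sub_eq_zero] at hq1
    rw [← hpp₀]; exact hq1
  have hpk : p₀ ^ n = p₀ := IsIdempotentElem.pow_eq hp₀ (by omega)
  rw [hc0.mul_pow, hpk] at hnil
  rw [hpe, ← mul_assoc, hnil, zero_mul]
end

section
/- Let A be a complex unital Banach algebra with unit e and let a ∈ A. Then a is Drazin invertible (there exists b ∈ A with ab = ba, b = ab², and aᵏ = aᵏ⁺¹b for some nonnegative integer k) if and only if a is both left Drazin invertible (there is an idempotent p₁ with ap₁ = p₁a, (ap₁)ⁿ = 0 for some n ≥ 1, and b₁ ∈ A with b₁p₁ = p₁b₁ and b₁(a + p₁) = e) and right Drazin invertible (there is an idempotent p₂ with ap₂ = p₂a, (ap₂)ᵐ = 0 for some m ≥ 1, and b₂ ∈ A with b₂p₂ = p₂b₂ and (a + p₂)b₂ = e). -/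
theorem aux_pow {A : Type*} [Ring A] (a p : A) (hp : p * p = p) (hc : a * p = p * a) (K : ℕ) :
    (a + p) ^ K * (1 - p) = a ^ K * (1 - p) := by
  have h1 : (a + p) * (1 - p) = a * (1 - p) := by
    rw [add_mul, mul_sub p, hp, mul_one, sub_self, add_zero]
  have h2 : Commute a (1 - p) := (Commute.one_right a).sub_right hc
  induction K with
  | zero => simp
  | succ k ih =>
    rw [pow_succ, mul_assoc, h1, h2.eq, ← mul_assoc, ih, mul_assoc, ← h2.eq, ← mul_assoc, ← pow_succ]

theorem aux_nil {A : Type*} [Ring A] (a p : A) (hp : p * p = p) (hc : a * p = p * a) (n m : ℕ)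
    (hn : 1 ≤ n) (h : (a * p) ^ n = 0) : a ^ (n + m) * p = 0 := by
  have hpi : p ^ n = p := IsIdempotentElem.pow_eq hp (by omega)
  have hc' : Commute a p := hc
  rw [hc'.mul_pow, hpi] at h
  rw [add_comm, pow_add, mul_assoc, h, mul_zero]

/-- **Drazin invertibility = left ∧ right Drazin invertibility.**
An element `a` of a complex unital Banach algebra is Drazin invertible if and only if it
is both left Drazin invertible and right Drazin invertible. -/
theorem Drazin_iff_left_and_right_Drazin
    {A : Type*} [NormedRing A] [NormedAlgebra ℂ A] [CompleteSpace A] (a : A) :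
    (∃ b : A, a * b = b * a ∧ b = a * (b * b) ∧ ∃ k : ℕ, a ^ k = a ^ (k + 1) * b) ↔
    ((∃ p₁ : A, p₁ * p₁ = p₁ ∧ a * p₁ = p₁ * a ∧ (∃ n : ℕ, 1 ≤ n ∧ (a * p₁) ^ n = 0) ∧
        ∃ b₁ : A, b₁ * p₁ = p₁ * b₁ ∧ b₁ * (a + p₁) = 1) ∧
      (∃ p₂ : A, p₂ * p₂ = p₂ ∧ a * p₂ = p₂ * a ∧ (∃ m : ℕ, 1 ≤ m ∧ (a * p₂) ^ m = 0) ∧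
        ∃ b₂ : A, b₂ * p₂ = p₂ * b₂ ∧ (a + p₂) * b₂ = 1)) := by
  constructor
  · rintro ⟨b, hab, hb, k, hk⟩
    obtain ⟨p, hp⟩ : ∃ p, p = 1 - a * b := ⟨_, rfl⟩
    have hbp : b * p = 0 := by
      rw [hp, mul_sub, mul_one, ← mul_assoc, ← hab, mul_assoc, ← hb, sub_self]
    have hab1 : a * b = 1 - p := by rw [hp]; abel
    have hpp : p * p = p := by
      nth_rewrite 1 [hp]
      rw [sub_mul, mul_assoc, hbp, mul_zero, one_mul, sub_zero]
    have hap : Commute a p := by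
      rw [hp]
      exact (Commute.one_right a).sub_right ((Commute.refl a).mul_right hab)
    have hbpc : Commute b p := by
      rw [hp]
      exact (Commute.one_right b).sub_right (Commute.mul_right (Commute.symm hab) (Commute.refl b))
    have hnil : (a * p) ^ (k + 1) = 0 := by
      rw [hap.mul_pow, IsIdempotentElem.pow_eq hpp (by omega), hp, mul_sub, mul_one, pow_succ',
        mul_assoc, ← mul_assoc (a ^ k), ← pow_succ, ← hk, sub_self]
    have hu : IsUnit (a * p + 1) := IsNilpotent.isUnit_add_one ⟨_, hnil⟩
    obtain ⟨u, hu⟩ := hu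
    have hpu : Commute p (u : A) := by
      rw [hu]
      exact ((hap.symm).mul_right (Commute.refl p)).add_right (Commute.one_right p)
    have hau : Commute a (u : A) := by
      rw [hu]
      exact ((Commute.refl a).mul_right hap).add_right (Commute.one_right a)
    have hpv := hpu.units_inv_right
    have hav := hau.units_inv_right
    have hkey : (a + p) * p = u * p := by
      rw [hu, add_mul, add_mul, mul_assoc, hpp, one_mul]
    have hc : Commute (b + p * (↑u⁻¹ : A)) p :=
      hbpc.add_left ((Commute.refl p).mul_left hpv.symm)
    have hR : (a + p) * (b + p * (↑u⁻¹ : A)) = 1 := by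
      rw [mul_add, ← mul_assoc _ p, hkey, ← hpu.eq, mul_assoc, Units.mul_inv, mul_one, add_mul,
        ← hbpc.eq, hbp, hab1]
      abel
    have hcomm : Commute (b + p * (↑u⁻¹ : A)) (a + p) :=
      Commute.add_right (Commute.add_left (Commute.symm hab) (hap.symm.mul_left hav.symm)) hc
    exact ⟨⟨p, hpp, hap, ⟨k + 1, by omega, hnil⟩, _, hc, hcomm.eq.trans hR⟩,
      ⟨p, hpp, hap, ⟨k + 1, by omega, hnil⟩, _, hc, hR⟩⟩
  · rintro ⟨⟨p, hp, hap, ⟨n, hn, hpn⟩, b, hbp, hb⟩, ⟨r, hr, har, ⟨m, hm, hrm⟩, c, hcr, hc⟩⟩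
    have h1 := aux_nil a p hp hap n m hn hpn
    have h2 := aux_nil a r hr har m n hm hrm
    rw [add_comm m n] at h2
    obtain ⟨K, hK⟩ : ∃ K, K = n + m := ⟨_, rfl⟩
    rw [← hK] at h1 h2
    have hapK : Commute (a ^ K) p := Commute.pow_left hap K
    have harK : Commute (a ^ K) r := Commute.pow_left har K
    have e1 := aux_pow a p hp hap K
    have e2 := aux_pow a r hr har K
    have hL : IsLeftRegular ((a + p) ^ K) := (isLeftRegular_of_mul_eq_one hb).pow K
    have hR : IsRightRegular ((a + r) ^ K) := (isRightRegular_of_mul_eq_one hc).pow K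
    have f1 : (1 - p) * r = 0 := by
      apply hL
      simp only
      rw [← mul_assoc, e1, mul_sub, h1, mul_one, sub_zero, h2, mul_zero]
    have hcr2 : Commute (a + r) (1 - r) :=
      (Commute.one_right _).sub_right (Commute.add_left har (Commute.refl r))
    have f2 : p * (1 - r) = 0 := by
      apply hR
      simp only
      rw [mul_assoc, ← (hcr2.pow_left K).eq, e2, mul_sub, h2, mul_one, sub_zero, ← hapK.eq, h1,
        zero_mul]
    have hpr : p = r := by
      rw [sub_mul, one_mul, sub_eq_zero] at f1
      rw [mul_sub, mul_one, sub_eq_zero] at f2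
      rw [f1, ← f2]
    subst hpr
    have hbc : b = c := left_inv_eq_right_inv hb hc
    subst hbc
    have hba : Commute b a := by
      have h : Commute (a + p) a := Commute.add_left (Commute.refl a) (Commute.symm hap)
      exact (h.symm.units_inv_right (u := ⟨a + p, b, hc, hb⟩)).symm
    have hbq : Commute b (1 - p) := (Commute.one_right b).sub_right hbp
    have haq : Commute a (1 - p) := (Commute.one_right a).sub_right hap
    have hqq : (1 - p) * (1 - p) = 1 - p := IsIdempotentElem.one_sub hp
    have hk : a * (b * (1 - p)) = 1 - p := by
      have := aux_pow a p hp hap 1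
      rw [pow_one, pow_one] at this
      rw [← mul_assoc, ← hba.eq, mul_assoc, ← this, ← mul_assoc, hb, one_mul]
    refine ⟨b * (1 - p), (hba.symm.mul_right haq).eq, ?_, K, ?_⟩
    · rw [← mul_assoc, hk, hbq.eq, ← mul_assoc, hqq]
    · rw [pow_succ, mul_assoc, hk, mul_sub, h1, mul_one, sub_zero]
end
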